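/- Let E be a Polish space, and endow the space 𝒫(E) of Borel probability measures on E with the topology of weak convergence (equivalently the Lévy–Prokhorov metric) and the associated Borel σ-algebra. Then there exists a measurable map Φ : 𝒫(E) × 𝒫(E) → 𝒫(E × E) such that for every pair (μ, ν): the first marginal of Φ(μ, ν) is μ, the second marginal is ν, and Φ(μ, ν)({(x, y) ∈ E × E : x ≠ y}) = ‖μ − ν‖_var. In other words, a maximal coupling can be chosen measurably in the pair of measures. -/

import Mathlib

open MeasureTheory

/-- Total variation distance between two measures:
`sup { |μ(Γ) − ν(Γ)| : Γ measurable }`. -/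
noncomputable def tvDist {E : Type*} [MeasurableSpace E] (μ ν : Measure E) : ℝ :=
  sSup {r : ℝ | ∃ Γ : Set E, MeasurableSet Γ ∧ r = |(μ Γ).toReal - (ν Γ).toReal|}

open ProbabilityTheory Filter Topology Set
open scoped ENNReal NNReal

/-- Evaluation maps are Borel measurable for the weak topology. -/
lemma measurable_toMeasure_borel {X : Type*} [TopologicalSpace X] [HasOuterApproxClosed X]
    [MeasurableSpace X] [BorelSpace X] :
    @Measurable _ _ (borel (ProbabilityMeasure X)) _
      (fun μ : ProbabilityMeasure X => μ.toMeasure) := by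
  let : MeasurableSpace (ProbabilityMeasure X) := borel _
  have : BorelSpace (ProbabilityMeasure X) := ⟨rfl⟩
  refine Measurable.measure_of_isPiSystem_of_isProbabilityMeasure
    (S := {s : Set X | IsOpen s}) (BorelSpace.measurable_eq) isPiSystem_isOpen ?_
  intro G hG
  apply LowerSemicontinuous.measurable
  rw [lowerSemicontinuous_iff_le_liminf]
  intro μ
  exact ProbabilityMeasure.le_liminf_measure_open_of_tendsto (μs := fun ν => ν) tendsto_id hG

/-- A map into probability measures is Borel measurable as soon as it is measurable
as a measure-valued map. -/
lemma borel_measurable_of_measurable_toMeasure {X A : Type*} [TopologicalSpace X]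
    [SecondCountableTopology X] [MeasurableSpace X] [BorelSpace X]
    [MeasurableSpace A] (F : A → ProbabilityMeasure X)
    (hF : Measurable fun a => (F a).toMeasure) :
    @Measurable _ _ _ (borel (ProbabilityMeasure X)) F := by
  classical
  let B := TopologicalSpace.countableBasis X
  have hBc : B.Countable := TopologicalSpace.countable_countableBasis X
  have hB : TopologicalSpace.IsTopologicalBasis B := TopologicalSpace.isBasis_countableBasis X
  have : Countable B := hBc
  let U : Finset B × ℚ → Set (ProbabilityMeasure X) :=
    fun p => {μ | Real.toNNReal p.2 < μ (⋃ t ∈ p.1, (t : Set X))}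
  let S : Set (Set (ProbabilityMeasure X)) := range U
  have hS : S.Countable := countable_range U
  let t' : TopologicalSpace (ProbabilityMeasure X) := TopologicalSpace.generateFrom S
  have h2 : @SecondCountableTopology _ t' := @SecondCountableTopology.mk _ t' ⟨S, hS, rfl⟩
  have hle : t' ≤ ProbabilityMeasure.instTopologicalSpace := by
    refine le_of_nhds_le_nhds fun μ => ?_
    have hcg : (@nhds _ t' μ).IsCountablyGenerated := by
      have : @FirstCountableTopology _ t' := @TopologicalSpace.SecondCountableTopology.to_firstCountableTopology _ t' h2
      exact @FirstCountableTopology.nhds_generated_countable _ t' this μ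
    have hnb : (@nhds _ t' μ).NeBot := @nhds_neBot _ t' μ
    change Tendsto (fun ν => ν) (@nhds _ t' μ) (@nhds _ ProbabilityMeasure.instTopologicalSpace μ)
    apply tendsto_of_forall_isOpen_le_liminf
    intro G hG
    refine (le_liminf_iff (isCoboundedUnder_ge_of_le (x := 1) _ (by simp))
      (by isBoundedDefault)).2 (fun r hr ↦ ?_)
    obtain ⟨T, TS, T_meas, TG⟩ :=
      μ.exists_lt_measure_biUnion_of_isOpen (S := B) (fun u hu x hx => by
        obtain ⟨s, hs, hxs, hsu⟩ := hB.exists_subset_of_mem_open hx hu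
        exact ⟨s, hs, (hB.isOpen hs).mem_nhds hxs, hsu⟩) hG hr
    obtain ⟨q, hq1, hq2⟩ : ∃ q : ℚ, r < Real.toNNReal q ∧ Real.toNNReal q < μ (⋃ t ∈ T, t) := by
      obtain ⟨q, h1, h2⟩ := NNReal.lt_iff_exists_rat_btwn _ _ |>.1 T_meas
      exact ⟨q, h2⟩
    have hTeq : (⋃ t ∈ T.subtype (· ∈ B), (t : Set X)) = ⋃ t ∈ T, t := by
      ext x
      simp only [mem_iUnion, Finset.mem_subtype, Subtype.exists, exists_prop]
      constructor
      · rintro ⟨a, _, h1, h2⟩; exact ⟨a, h1, h2⟩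
      · rintro ⟨a, h1, h2⟩; exact ⟨a, TS a h1, h1, h2⟩
    have hopen : @IsOpen _ t' (U (T.subtype (· ∈ B), q)) :=
      TopologicalSpace.isOpen_generateFrom_of_mem ⟨_, rfl⟩
    have hmem : μ ∈ U (T.subtype (· ∈ B), q) := by
      change Real.toNNReal q < μ (⋃ t ∈ T.subtype (· ∈ B), (t : Set X))
      rwa [hTeq]
    filter_upwards [@IsOpen.mem_nhds _ t' _ _ hopen hmem] with ν hν
    have hν' : Real.toNNReal q < ν (⋃ t ∈ T.subtype (· ∈ B), (t : Set X)) := hν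
    rw [hTeq] at hν'
    exact (hq1.trans hν').trans_le (ProbabilityMeasure.apply_mono _ TG)
  have hborel : @borel (ProbabilityMeasure X) ProbabilityMeasure.instTopologicalSpace ≤ MeasurableSpace.generateFrom S := by
    rw [← @borel_eq_generateFrom_of_subbasis _ S t' h2 rfl]
    exact borel_anti hle
  have hmeas : @Measurable _ _ _ (MeasurableSpace.generateFrom S) F := by
    refine measurable_generateFrom ?_
    rintro _ ⟨⟨T, q⟩, rfl⟩
    have hTm : MeasurableSet (⋃ t ∈ T, (t : Set X)) :=
      (isOpen_biUnion fun t _ => hB.isOpen t.2).measurableSet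
    have hev : Measurable fun a => (F a) (⋃ t ∈ T, (t : Set X)) :=
      ((Measure.measurable_coe hTm).comp hF).ennreal_toNNReal
    exact measurableSet_lt measurable_const hev
  exact hmeas.mono le_rfl hborel

/-- The glued measure built from the common part and the two residual parts. -/
noncomputable def glue {E : Type*} [MeasurableSpace E] (m a b : Measure E) : Measure (E × E) :=
  m.map (fun x => (x, x)) + (a univ)⁻¹ • a.prod b

lemma glue_fst {E : Type*} [MeasurableSpace E] (m a b : Measure E)
    [IsFiniteMeasure a] [IsFiniteMeasure b] (hab : a univ = b univ) :
    (glue m a b).map Prod.fst = m + a := by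
  rw [glue, Measure.map_add _ _ measurable_fst, Measure.map_map measurable_fst (by fun_prop),
    Measure.map_smul, Measure.map_fst_prod, smul_smul, ← hab]
  congr 1
  · exact Measure.map_id
  · by_cases h : a univ = 0
    · have : a = 0 := Measure.measure_univ_eq_zero.1 h
      simp [this]
    · rw [ENNReal.inv_mul_cancel h (measure_ne_top _ _), one_smul]

lemma glue_snd {E : Type*} [MeasurableSpace E] (m a b : Measure E)
    [IsFiniteMeasure a] [IsFiniteMeasure b] (hab : a univ = b univ) :
    (glue m a b).map Prod.snd = m + b := by
  rw [glue, Measure.map_add _ _ measurable_snd, Measure.map_map measurable_snd (by fun_prop),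
    Measure.map_smul, Measure.map_snd_prod, smul_smul]
  congr 1
  · exact Measure.map_id
  · by_cases h : a univ = 0
    · have : b = 0 := Measure.measure_univ_eq_zero.1 (hab ▸ h)
      simp [this]
    · rw [ENNReal.inv_mul_cancel h (measure_ne_top _ _), one_smul]

lemma glue_offdiag {E : Type*} [MeasurableSpace E] [MeasurableEq E] (m a b : Measure E)
    [IsFiniteMeasure a] [IsFiniteMeasure b] (hab : a univ = b univ)
    (S : Set E) (ha : a Sᶜ = 0) (hb : b S = 0) :
    glue m a b {p : E × E | p.1 ≠ p.2} = a univ := by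
  have hD : MeasurableSet {p : E × E | p.1 ≠ p.2} := (measurableSet_eq_fun measurable_fst measurable_snd).compl
  have h0 : (a.prod b) {p : E × E | p.1 ≠ p.2}ᶜ = 0 := by
    refine measure_mono_null (t := (Sᶜ ×ˢ univ) ∪ (univ ×ˢ S)) ?_ ?_
    · rintro ⟨x, y⟩ h
      simp at h
      subst h
      by_cases hx : x ∈ S <;> simp [hx]
    · rw [measure_union_null_iff]
      simp [Measure.prod_prod, ha, hb]
  have h1 : (a.prod b) {p : E × E | p.1 ≠ p.2} = a univ * a univ := by
    rw [measure_of_measure_compl_eq_zero h0, ← univ_prod_univ, Measure.prod_prod, ← hab]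
  rw [glue, Measure.add_apply, Measure.map_apply (by fun_prop) hD, Measure.smul_apply, h1,
    smul_eq_mul, ← mul_assoc]
  by_cases h : a univ = 0
  · simp [h]
  · rw [ENNReal.inv_mul_cancel h (measure_ne_top _ _)]; simp

lemma tvDist_eq {E : Type*} [MeasurableSpace E] (m a b : Measure E)
    [IsFiniteMeasure m] [IsFiniteMeasure a] [IsFiniteMeasure b] (hab : a univ = b univ)
    (S : Set E) (hS : MeasurableSet S) (ha : a Sᶜ = 0) (hb : b S = 0) :
    tvDist (m + a) (m + b) = (a univ).toReal := by
  have key : ∀ Γ : Set E, ((m + a) Γ).toReal - ((m + b) Γ).toReal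
      = (a Γ).toReal - (b Γ).toReal := by
    intro Γ
    rw [Measure.add_apply, Measure.add_apply, ENNReal.toReal_add (measure_ne_top _ _)
      (measure_ne_top _ _), ENNReal.toReal_add (measure_ne_top _ _) (measure_ne_top _ _)]
    ring
  refine IsGreatest.csSup_eq ⟨⟨S, hS, ?_⟩, ?_⟩
  · rw [key, hb, measure_of_measure_compl_eq_zero ha]
    simp
  · rintro r ⟨Γ, -, rfl⟩
    rw [key]
    have h1 : (a Γ).toReal ≤ (a univ).toReal :=
      ENNReal.toReal_mono (measure_ne_top _ _) (measure_mono (subset_univ _))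
    have h2 : (b Γ).toReal ≤ (a univ).toReal := by
      rw [hab]
      exact ENNReal.toReal_mono (measure_ne_top _ _) (measure_mono (subset_univ _))
    have h3 : 0 ≤ (a Γ).toReal := ENNReal.toReal_nonneg
    have h4 : 0 ≤ (b Γ).toReal := ENNReal.toReal_nonneg
    rw [abs_le]; constructor <;> linarith

/-- Measurable Hahn-type decomposition of a pair of finite kernels. -/
lemma exists_kernel_decomp {A E : Type*} [MeasurableSpace A] [MeasurableSpace E]
    [MeasurableSpace.CountableOrCountablyGenerated A E]
    (κ η : Kernel A E) [IsFiniteKernel κ] [IsFiniteKernel η] :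
    ∃ m a b : Kernel A E, κ = m + a ∧ η = m + b ∧
      ∀ x, ∃ S : Set E, MeasurableSet S ∧ a x Sᶜ = 0 ∧ b x S = 0 := by
  obtain ⟨p, q, hp, hq, hκ, hη⟩ : ∃ p q : A → E → ℝ≥0∞, Measurable (Function.uncurry p) ∧
      Measurable (Function.uncurry q) ∧ Kernel.withDensity (κ + η) p = κ ∧
      Kernel.withDensity (κ + η) q = η :=
    ⟨fun x y => (Real.toNNReal (Kernel.rnDerivAux κ (κ + η) x y) : ℝ≥0∞),
      fun x y => (Real.toNNReal (1 - Kernel.rnDerivAux κ (κ + η) x y) : ℝ≥0∞),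
      (Kernel.measurable_rnDerivAux κ (κ + η)).real_toNNReal.coe_nnreal_ennreal,
      (measurable_const.sub
        (Kernel.measurable_rnDerivAux κ (κ + η))).real_toNNReal.coe_nnreal_ennreal,
      Kernel.withDensity_rnDerivAux κ η, Kernel.withDensity_one_sub_rnDerivAux κ η⟩
  have hm : Measurable (Function.uncurry fun x y => min (p x y) (q x y)) := hp.min hq
  have ha : Measurable (Function.uncurry fun x y => p x y - q x y) := hp.sub hq
  have hb : Measurable (Function.uncurry fun x y => q x y - p x y) := hq.sub hp
  refine ⟨Kernel.withDensity (κ + η) (fun x y => min (p x y) (q x y)),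
    Kernel.withDensity (κ + η) (fun x y => p x y - q x y),
    Kernel.withDensity (κ + η) (fun x y => q x y - p x y), ?_, ?_, fun x =>
    ⟨{y | q x y < p x y}, ?_, ?_, ?_⟩⟩
  · rw [← Kernel.withDensity_add_right hm ha]
    conv_lhs => rw [← hκ]
    congr 1
    ext x y
    simp only [Pi.add_apply]
    rcases le_total (p x y) (q x y) with h | h
    · rw [min_eq_left h, tsub_eq_zero_of_le h, add_zero]
    · rw [min_eq_right h, add_tsub_cancel_of_le h]
  · rw [← Kernel.withDensity_add_right hm hb]
    conv_lhs => rw [← hη]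
    congr 1
    ext x y
    simp only [Pi.add_apply]
    rcases le_total (p x y) (q x y) with h | h
    · rw [min_eq_left h, add_tsub_cancel_of_le h]
    · rw [min_eq_right h, tsub_eq_zero_of_le h, add_zero]
  · exact measurableSet_lt (hq.comp measurable_prodMk_left) (hp.comp measurable_prodMk_left)
  · rw [Kernel.withDensity_apply' _ ha]
    have hSm : MeasurableSet {y | q x y < p x y}ᶜ :=
      (measurableSet_lt (hq.comp measurable_prodMk_left) (hp.comp measurable_prodMk_left)).compl
    rw [setLIntegral_congr_fun (g := fun _ => 0) hSm]
    · simp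
    · intro y hy
      simp only [mem_compl_iff, mem_ofPred_eq, not_lt] at hy
      exact tsub_eq_zero_of_le hy
  · rw [Kernel.withDensity_apply' _ hb]
    have hSm : MeasurableSet {y | q x y < p x y} :=
      (measurableSet_lt (hq.comp measurable_prodMk_left) (hp.comp measurable_prodMk_left))
    rw [setLIntegral_congr_fun (g := fun _ => 0) hSm]
    · simp
    · intro y hy
      exact tsub_eq_zero_of_le (le_of_lt hy)

/-- on a Polish space, a maximal coupling can be chosen measurably in the
pair of probability measures, where `𝒫(E)` carries the topology of weak convergence and
the associated Borel σ-algebra. -/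
theorem exists_measurable_maximal_coupling
    {E : Type*} [TopologicalSpace E] [PolishSpace E] [MeasurableSpace E] [BorelSpace E] :
    ∃ Φ : ProbabilityMeasure E × ProbabilityMeasure E → ProbabilityMeasure (E × E),
      @Measurable _ _ (borel (ProbabilityMeasure E × ProbabilityMeasure E))
        (borel (ProbabilityMeasure (E × E))) Φ ∧
      ∀ μ ν : ProbabilityMeasure E,
        (Φ (μ, ν)).toMeasure.map Prod.fst = μ.toMeasure ∧
        (Φ (μ, ν)).toMeasure.map Prod.snd = ν.toMeasure ∧
        ((Φ (μ, ν)).toMeasure {p : E × E | p.1 ≠ p.2}).toReal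
          = tvDist μ.toMeasure ν.toMeasure := by
  let mA : MeasurableSpace (ProbabilityMeasure E × ProbabilityMeasure E) := borel _
  let κ : @Kernel (ProbabilityMeasure E × ProbabilityMeasure E) E mA _ :=
    @Kernel.mk _ _ mA _ (fun x => x.1.toMeasure)
      (measurable_toMeasure_borel.comp continuous_fst.borel_measurable)
  let η : @Kernel (ProbabilityMeasure E × ProbabilityMeasure E) E mA _ :=
    @Kernel.mk _ _ mA _ (fun x => x.2.toMeasure)
      (measurable_toMeasure_borel.comp continuous_snd.borel_measurable)
  have : @IsFiniteKernel _ _ mA _ κ := ⟨1, ENNReal.one_lt_top, fun x => by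
    change x.1.toMeasure univ ≤ 1; simp⟩
  have : @IsFiniteKernel _ _ mA _ η := ⟨1, ENNReal.one_lt_top, fun x => by
    change x.2.toMeasure univ ≤ 1; simp⟩
  obtain ⟨m, a, b, hκ, hη, hS⟩ := @exists_kernel_decomp _ _ mA _ _ κ η _ _
  have e1 : ∀ x : ProbabilityMeasure E × ProbabilityMeasure E,
      x.1.toMeasure = m x + a x := fun x => by
    change κ x = _; rw [hκ]; rfl
  have e2 : ∀ x : ProbabilityMeasure E × ProbabilityMeasure E,
      x.2.toMeasure = m x + b x := fun x => by
    change η x = _; rw [hη]; rfl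
  have f1 : ∀ x : ProbabilityMeasure E × ProbabilityMeasure E, ∀ s : Set E, m x s ≤ 1 :=
    fun x s => by
      have : m x s ≤ x.1.toMeasure s := by rw [e1]; simp
      exact this.trans prob_le_one
  have f2 : ∀ x : ProbabilityMeasure E × ProbabilityMeasure E, ∀ s : Set E, a x s ≤ 1 :=
    fun x s => by
      have : a x s ≤ x.1.toMeasure s := by rw [e1]; simp
      exact this.trans prob_le_one
  have f3 : ∀ x : ProbabilityMeasure E × ProbabilityMeasure E, ∀ s : Set E, b x s ≤ 1 :=
    fun x s => by
      have : b x s ≤ x.2.toMeasure s := by rw [e2]; simp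
      exact this.trans prob_le_one
  have : @IsFiniteKernel _ _ mA _ m := ⟨1, ENNReal.one_lt_top, fun x => f1 x _⟩
  have : @IsFiniteKernel _ _ mA _ a := ⟨1, ENNReal.one_lt_top, fun x => f2 x _⟩
  have : @IsFiniteKernel _ _ mA _ b := ⟨1, ENNReal.one_lt_top, fun x => f3 x _⟩
  have hab : ∀ x : ProbabilityMeasure E × ProbabilityMeasure E, a x univ = b x univ := by
    intro x
    have h1 : (m x + a x) univ = 1 := by rw [← e1]; exact measure_univ
    have h2 : (m x + b x) univ = 1 := by rw [← e2]; exact measure_univ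
    rw [← h2, Measure.add_apply, Measure.add_apply] at h1
    exact (ENNReal.add_right_inj (measure_ne_top _ _)).1 h1
  have hprob : ∀ x, IsProbabilityMeasure (glue (m x) (a x) (b x)) := by
    intro x
    have h := glue_fst (m x) (a x) (b x) (hab x)
    rw [← e1] at h
    refine ⟨?_⟩
    have h' : ((glue (m x) (a x) (b x)).map Prod.fst) univ = 1 := by rw [h]; exact measure_univ
    rwa [Measure.map_apply measurable_fst MeasurableSet.univ, preimage_univ] at h'
  refine ⟨fun x => ⟨glue (m x) (a x) (b x), hprob x⟩, ?_, fun μ ν => ⟨?_, ?_, ?_⟩⟩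
  · refine @borel_measurable_of_measurable_toMeasure (E × E) _ _ _ _ _ mA _ ?_
    change @Measurable _ _ mA _ (fun x => glue (m x) (a x) (b x))
    refine Measure.measurable_of_measurable_coe _ fun s hs => ?_
    have : (fun x => glue (m x) (a x) (b x) s) = fun x =>
        m x ((fun y : E => (y, y)) ⁻¹' s) + (a x univ)⁻¹ * (a ×ₖ b) x s := by
      ext x
      rw [glue, Measure.add_apply, Measure.map_apply (by fun_prop) hs, Measure.smul_apply,
        smul_eq_mul, Kernel.prod_apply]
    rw [this]
    exact (m.measurable_coe ((by fun_prop : Measurable fun y : E => (y, y)) hs)).add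
      ((a.measurable_coe MeasurableSet.univ).inv.mul ((a ×ₖ b).measurable_coe hs))
  · exact (glue_fst _ _ _ (hab (μ, ν))).trans (e1 (μ, ν)).symm
  · exact (glue_snd _ _ _ (hab (μ, ν))).trans (e2 (μ, ν)).symm
  · obtain ⟨S, hSm, hSa, hSb⟩ := hS (μ, ν)
    have h1 := glue_offdiag (m (μ, ν)) _ _ (hab (μ, ν)) S hSa hSb
    have h2 := tvDist_eq (m (μ, ν)) _ _ (hab (μ, ν)) S hSm hSa hSb
    rw [← e1, ← e2] at h2
    rw [h2]
    exact congrArg ENNReal.toReal h1
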